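/- On finite traces, ◇□(φ ∨ ψ) is equivalent to ◇□φ ∨ ◇□ψ; this equivalence fails on infinite traces (there is an infinite trace and atoms p, q such that ◇□(p ∨ q) holds but neither ◇□p nor ◇□q holds). -/

import Mathlib

inductive Fml (P : Type) : Type
  | atom : P → Fml P
  | tru : Fml P
  | neg : Fml P → Fml P
  | and : Fml P → Fml P → Fml P
  | or : Fml P → Fml P → Fml P
  | untl : Fml P → Fml P → Fml P

namespace Fml

/-- Satisfaction on a finite trace of length `l` (time points `[0, l]`),
with strict until. -/
def FinSat {P : Type} (σ : ℕ → P → Prop) (l : ℕ) : Fml P → ℕ → Prop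
  | atom p, n => σ n p
  | tru, _ => True
  | neg φ, n => ¬ FinSat σ l φ n
  | and φ ψ, n => FinSat σ l φ n ∧ FinSat σ l ψ n
  | or φ ψ, n => FinSat σ l φ n ∨ FinSat σ l ψ n
  | untl φ ψ, n => ∃ m, n < m ∧ m ≤ l ∧ FinSat σ l ψ m ∧ ∀ i, n < i → i < m → FinSat σ l φ i

/-- Satisfaction on an infinite trace, with strict until. -/
def InfSat {P : Type} (σ : ℕ → P → Prop) : Fml P → ℕ → Prop
  | atom p, n => σ n p
  | tru, _ => True
  | neg φ, n => ¬ InfSat σ φ n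
  | and φ ψ, n => InfSat σ φ n ∧ InfSat σ ψ n
  | or φ ψ, n => InfSat σ φ n ∨ InfSat σ ψ n
  | untl φ ψ, n => ∃ m, n < m ∧ InfSat σ ψ m ∧ ∀ i, n < i → i < m → InfSat σ φ i

def fls {P : Type} : Fml P := neg tru
/-- strong (strict) next: ◯φ := ⊥ U φ -/
def nextS {P : Type} (φ : Fml P) : Fml P := untl fls φ
/-- last := □⊥, i.e. ¬(⊤ U ⊤) -/
def lastF {P : Type} : Fml P := neg (untl tru tru)
/-- weak next: ●φ := ¬◯¬φ -/
def wnext {P : Type} (φ : Fml P) : Fml P := neg (nextS (neg φ))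
/-- strict eventually: ◇φ := ⊤ U φ -/
def evS {P : Type} (φ : Fml P) : Fml P := untl tru φ
/-- reflexive eventually: ◇⁺φ := φ ∨ ◇φ -/
def evP {P : Type} (φ : Fml P) : Fml P := Fml.or φ (evS φ)
/-- strict always: □φ := ¬◇¬φ -/
def alwS {P : Type} (φ : Fml P) : Fml P := neg (evS (neg φ))
/-- reflexive always: □⁺φ := φ ∧ □φ -/
def alwP {P : Type} (φ : Fml P) : Fml P := Fml.and φ (alwS φ)

/-- `Agrees I σ l` : the traces `I` and `σ` agree on the time points `[0, l]`.
Used both for "the infinite trace `I` is an extension of the finite trace `(σ, l)`"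
and for "the finite trace `(σ, l)` is a prefix of the infinite trace `I`". -/
def Agrees {P : Type} (I : ℕ → P → Prop) (σ : ℕ → P → Prop) (l : ℕ) : Prop :=
  ∀ i ≤ l, ∀ p, I i p ↔ σ i p

/-- F⇒∃ : satisfaction on a finite trace implies satisfaction on some infinite extension. -/
def FimpE {P : Type} (χ : Fml P) : Prop :=
  ∀ (σ : ℕ → P → Prop) (l : ℕ), FinSat σ l χ 0 → ∃ I, Agrees I σ l ∧ InfSat I χ 0

/-- F⇒∀ : satisfaction on a finite trace implies satisfaction on every infinite extension. -/
def FimpA {P : Type} (χ : Fml P) : Prop :=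
  ∀ (σ : ℕ → P → Prop) (l : ℕ), FinSat σ l χ 0 → ∀ I, Agrees I σ l → InfSat I χ 0

/-- F⇐∃ : satisfaction on some infinite extension implies satisfaction on the finite trace. -/
def FrevE {P : Type} (χ : Fml P) : Prop :=
  ∀ (σ : ℕ → P → Prop) (l : ℕ), (∃ I, Agrees I σ l ∧ InfSat I χ 0) → FinSat σ l χ 0

/-- F⇐∀ : satisfaction on all infinite extensions implies satisfaction on the finite trace. -/
def FrevA {P : Type} (χ : Fml P) : Prop :=
  ∀ (σ : ℕ → P → Prop) (l : ℕ), (∀ I, Agrees I σ l → InfSat I χ 0) → FinSat σ l χ 0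

/-- I⇒∀ : satisfaction on an infinite trace implies satisfaction on every finite prefix. -/
def IimpA {P : Type} (χ : Fml P) : Prop :=
  ∀ I : ℕ → P → Prop, InfSat I χ 0 → ∀ (σ : ℕ → P → Prop) (l : ℕ), Agrees I σ l → FinSat σ l χ 0

/-- I⇒∃ : satisfaction on an infinite trace implies satisfaction on some finite prefix. -/
def IimpE {P : Type} (χ : Fml P) : Prop :=
  ∀ I : ℕ → P → Prop, InfSat I χ 0 → ∃ (σ : ℕ → P → Prop) (l : ℕ), Agrees I σ l ∧ FinSat σ l χ 0

end Fml

/-!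
At the last instant of a finite trace every `□φ` holds vacuously, so before the last instant
`◇□φ` is true whatever `φ` is. On an infinite trace `◇□φ` says that `φ` holds at all sufficiently
large times, which does not distribute over `∨`: every time is even or odd, but neither parity
persists.
-/

namespace Fml

variable {P : Type} {σ : ℕ → P → Prop} {l n : ℕ} {φ ψ : Fml P}

theorem finSat_evS : FinSat σ l (evS φ) n ↔ ∃ m, n < m ∧ m ≤ l ∧ FinSat σ l φ m := by
  simp [evS, FinSat]

theorem finSat_alwS : FinSat σ l (alwS φ) n ↔ ∀ m, n < m → m ≤ l → FinSat σ l φ m := by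
  simp [alwS, evS, FinSat]

theorem finSat_alwS_last : FinSat σ l (alwS φ) l :=
  finSat_alwS.2 fun _ hlm hml => absurd hml hlm.not_ge

theorem finSat_evS_alwS : FinSat σ l (evS (alwS φ)) n ↔ n < l := by
  rw [finSat_evS]
  exact ⟨fun ⟨_, hnm, hml, _⟩ => hnm.trans_le hml, fun hnl => ⟨l, hnl, le_rfl, finSat_alwS_last⟩⟩

theorem finSat_evS_alwS_or :
    FinSat σ l (evS (alwS (or φ ψ))) n ↔ FinSat σ l (or (evS (alwS φ)) (evS (alwS ψ))) n := by
  simp only [FinSat, finSat_evS_alwS, or_self]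

theorem infSat_evS : InfSat σ (evS φ) n ↔ ∃ m, n < m ∧ InfSat σ φ m := by
  simp [evS, InfSat]

theorem infSat_alwS : InfSat σ (alwS φ) n ↔ ∀ m, n < m → InfSat σ φ m := by
  simp [alwS, evS, InfSat]

theorem infSat_evS_alwS :
    InfSat σ (evS (alwS φ)) n ↔ ∀ᶠ k in Filter.atTop, InfSat σ φ k := by
  simp only [infSat_evS, infSat_alwS]
  exact (Filter.atTop_basis_Ioi' n).eventually_iff.symm

/-- The infinite trace over two atoms in which `true` holds exactly at the even instants and `false`
exactly at the odd ones. It witnesses that `◇□` does not distribute over `∨`. -/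
def parityTrace : ℕ → Bool → Prop
  | n, true => Even n
  | n, false => Odd n

theorem infSat_parityTrace_evS_alwS_or :
    InfSat parityTrace (evS (alwS (or (atom true) (atom false)))) n :=
  infSat_evS_alwS.2 (.of_forall Nat.even_or_odd)

theorem not_infSat_parityTrace_evS_alwS_true :
    ¬ InfSat parityTrace (evS (alwS (atom true))) n := by
  rw [infSat_evS_alwS, Filter.not_eventually]
  exact Nat.frequently_odd.mono fun _ => Nat.not_even_iff_odd.2

theorem not_infSat_parityTrace_evS_alwS_false :
    ¬ InfSat parityTrace (evS (alwS (atom false))) n := by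
  rw [infSat_evS_alwS, Filter.not_eventually]
  exact Nat.frequently_even.mono fun _ => Nat.not_odd_iff_even.2

end Fml

theorem stmt_4 :
    (∀ (P : Type) (φ ψ : Fml P) (σ : ℕ → P → Prop) (l n : ℕ), n ≤ l →
      (Fml.FinSat σ l (Fml.evS (Fml.alwS (Fml.or φ ψ))) n ↔
        Fml.FinSat σ l (Fml.or (Fml.evS (Fml.alwS φ)) (Fml.evS (Fml.alwS ψ))) n)) ∧
    (∃ (P : Type) (σ : ℕ → P → Prop) (p q : P),
      Fml.InfSat σ (Fml.evS (Fml.alwS (Fml.or (Fml.atom p) (Fml.atom q)))) 0 ∧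
      ¬ Fml.InfSat σ (Fml.evS (Fml.alwS (Fml.atom p))) 0 ∧
      ¬ Fml.InfSat σ (Fml.evS (Fml.alwS (Fml.atom q))) 0) :=
  ⟨fun _ _ _ _ _ _ _ => Fml.finSat_evS_alwS_or,
    Bool, Fml.parityTrace, true, false,
    Fml.infSat_parityTrace_evS_alwS_or,
    Fml.not_infSat_parityTrace_evS_alwS_true,
    Fml.not_infSat_parityTrace_evS_alwS_false⟩
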